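/- arXiv:1909.13528 — 6 statements merged into one kernel-verified Lean document; each statement's English description precedes it below -/
import Mathlib

section
/- Let m ∈ ℕ with m ≥ 2. Then for every k ∈ {0, 1, …, 2m}, the sum Σ_{ℓ=−m}^{m} a_ℓ^{(2m)} ℓ^k equals 1 if k ∈ {0,1} and equals 0 otherwise (with the convention 0⁰ = 1). -/
/-!
Write `w ℓ = (-1)^ℓ (m!)² / ((m+ℓ)! (m-ℓ)!)`. Up to the constant factor `(m!)² / (2m)!` and the sign
`(-1)^m`, these are the signed binomial coefficients `(-1)^i (2m choose i)` with `i = m + ℓ`, so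
`∑ ℓ, w ℓ * ℓ ^ j` is a multiple of the `2m`-th forward difference of `x ↦ x ^ j` at `-m`, which
vanishes for `j < 2m` (`sum_centralWeight_mul_pow`). Since `a_ℓ * ℓ ^ (j+1) = -w ℓ * ℓ ^ j` for
`ℓ ≠ 0`, while the term at `ℓ = 0` contributes `0` instead of `-w 0 * 0 ^ j = -0 ^ j`, the moment of
order `j + 1` equals `0 ^ j`. The zeroth moment is `a_0 = 1` because `a_ℓ` is odd away from `0`.
-/

/-- The central difference coefficients `a_ℓ^{(2m)}` for `ℓ ∈ {−m, …, m}`: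
`a_ℓ^{(2m)} = 1` if `ℓ = 0`, and
`a_ℓ^{(2m)} = (−1)^{ℓ+1} (m!)² / (ℓ (m+ℓ)! (m−ℓ)!)` otherwise. -/
noncomputable def centralCoeff (m : ℕ) (ℓ : ℤ) : ℝ :=
  if ℓ = 0 then 1
  else (-1 : ℝ) ^ (ℓ + 1) * (Nat.factorial m : ℝ) ^ 2 /
    ((ℓ : ℝ) * (Nat.factorial (m + ℓ).toNat : ℝ) * (Nat.factorial (m - ℓ).toNat : ℝ))

/-- The weights `(-1)^ℓ (m!)² / ((m+ℓ)! (m-ℓ)!)` of the `2m`-th central difference, normalized to be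
`1` at `ℓ = 0`. -/
noncomputable def centralWeight (m : ℕ) (ℓ : ℤ) : ℝ :=
  (-1 : ℝ) ^ ℓ * (Nat.factorial m : ℝ) ^ 2 /
    ((Nat.factorial (m + ℓ).toNat : ℝ) * (Nat.factorial (m - ℓ).toNat : ℝ))

lemma centralWeight_zero (m : ℕ) : centralWeight m 0 = 1 := by
  have : (Nat.factorial m : ℝ) ≠ 0 := by positivity
  simp only [centralWeight, zpow_zero, add_zero, sub_zero, Int.toNat_natCast]
  field_simp

lemma centralWeight_shift (m i : ℕ) (hi : i ≤ 2 * m) :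
    centralWeight m (-(m : ℤ) + i) =
      (-1 : ℝ) ^ m * (Nat.factorial m : ℝ) ^ 2 / (Nat.factorial (2 * m) : ℝ) *
        ((-1 : ℝ) ^ (2 * m - i) * ((2 * m).choose i : ℝ)) := by
  have h1 : ((m : ℤ) + (-(m : ℤ) + i)).toNat = i := by omega
  have h2 : ((m : ℤ) - (-(m : ℤ) + i)).toNat = 2 * m - i := by omega
  have h3 : (-1 : ℝ) ^ (-(m : ℤ) + i) = (-1) ^ m * (-1) ^ (2 * m - i) := by
    -- The two exponents differ by the even number `2 (2m - i)`.
    have e : (m : ℤ) + ((2 * m - i : ℕ) : ℤ) = (-(m : ℤ) + i) + 2 * ((2 * m - i : ℕ) : ℤ) := by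
      omega
    rw [← zpow_natCast, ← zpow_natCast, ← zpow_add₀ (by norm_num), e,
      zpow_add₀ (by norm_num) (-(m : ℤ) + i), zpow_mul]
    norm_num
  rw [centralWeight, h1, h2, h3, Nat.cast_choose ℝ hi]
  have := Nat.factorial_ne_zero (2 * m)
  field_simp

lemma sum_Icc_eq_sum_range_shift (m : ℕ) (f : ℤ → ℝ) :
    ∑ ℓ ∈ Finset.Icc (-(m : ℤ)) (m : ℤ), f ℓ =
      ∑ i ∈ Finset.range (2 * m + 1), f (-(m : ℤ) + i) := by
  symm
  refine Finset.sum_bij (fun i _ => -(m : ℤ) + i) ?_ ?_ ?_ ?_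
  · intro i hi
    simp only [Finset.mem_range, Finset.mem_Icc] at *
    omega
  · intro i _ j _ h
    omega
  · intro ℓ hℓ
    simp only [Finset.mem_Icc] at hℓ
    exact ⟨(ℓ + m).toNat, by simp only [Finset.mem_range]; omega, by omega⟩
  · intros
    rfl

/-- The `2m`-th central difference annihilates monomials of degree less than `2m`. -/
lemma sum_centralWeight_mul_pow (m j : ℕ) (hj : j < 2 * m) :
    ∑ ℓ ∈ Finset.Icc (-(m : ℤ)) (m : ℤ), centralWeight m ℓ * (ℓ : ℝ) ^ j = 0 := by
  have h := congrFun (fwdDiff_iter_pow_eq_zero_of_lt (R := ℝ) hj) (-(m : ℝ))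
  rw [fwdDiff_iter_eq_sum_shift] at h
  rw [sum_Icc_eq_sum_range_shift,
    ← mul_zero ((-1 : ℝ) ^ m * (Nat.factorial m : ℝ) ^ 2 / (Nat.factorial (2 * m) : ℝ)),
    ← Pi.zero_apply (M := fun _ : ℝ => ℝ) (-(m : ℝ)), ← h, Finset.mul_sum]
  refine Finset.sum_congr rfl fun i hi => ?_
  rw [centralWeight_shift m i (by simpa [Nat.lt_succ_iff] using hi)]
  simp [zsmul_eq_mul, mul_assoc]

lemma centralCoeff_mul_pow_succ (m j : ℕ) (ℓ : ℤ) :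
    centralCoeff m ℓ * (ℓ : ℝ) ^ (j + 1) =
      (if ℓ = 0 then (0 : ℝ) ^ j else 0) - centralWeight m ℓ * (ℓ : ℝ) ^ j := by
  by_cases h : ℓ = 0
  · subst h
    simp [centralWeight_zero]
  · have hℓ : (ℓ : ℝ) ≠ 0 := by exact_mod_cast h
    rw [centralCoeff, if_neg h, if_neg h, centralWeight, zpow_add₀ (by norm_num)]
    field_simp
    ring

lemma centralCoeff_neg (m : ℕ) {ℓ : ℤ} (h : ℓ ≠ 0) :
    centralCoeff m (-ℓ) = -centralCoeff m ℓ := by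
  have e : (-1 : ℝ) ^ (-ℓ) = (-1) ^ ℓ := by rw [zpow_neg, ← inv_zpow]; norm_num
  rw [centralCoeff, centralCoeff, if_neg h, if_neg (neg_ne_zero.mpr h),
    zpow_add₀ (by norm_num), zpow_add₀ (by norm_num), e, ← sub_eq_add_neg, sub_neg_eq_add,
    Int.cast_neg, neg_mul, neg_mul, div_neg, mul_right_comm (ℓ : ℝ)]

lemma sum_centralCoeff (m : ℕ) :
    ∑ ℓ ∈ Finset.Icc (-(m : ℤ)) (m : ℤ), centralCoeff m ℓ = 1 := by
  have hrefl : ∑ ℓ ∈ Finset.Icc (-(m : ℤ)) (m : ℤ), centralCoeff m ℓ =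
      ∑ ℓ ∈ Finset.Icc (-(m : ℤ)) (m : ℤ), centralCoeff m (-ℓ) :=
    Finset.sum_bij (fun ℓ _ => -ℓ) (by intro a ha; simp only [Finset.mem_Icc] at *; omega)
      (by intro a _ b _ h; omega)
      (by
        intro b hb
        simp only [Finset.mem_Icc] at hb
        exact ⟨-b, by simp only [Finset.mem_Icc]; omega, by omega⟩)
      (by intros; rw [neg_neg])
  have hpair : ∀ ℓ : ℤ, centralCoeff m ℓ + centralCoeff m (-ℓ) = if ℓ = 0 then 2 else 0 := by
    intro ℓ
    split_ifs with h
    · subst h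
      norm_num [centralCoeff]
    · rw [centralCoeff_neg m h, add_neg_cancel]
  have hsum : ∑ ℓ ∈ Finset.Icc (-(m : ℤ)) (m : ℤ), (centralCoeff m ℓ + centralCoeff m (-ℓ)) = 2 := by
    simp [hpair]
  rw [Finset.sum_add_distrib, ← hrefl] at hsum
  linarith

theorem centralCoeff_sum_pow (m : ℕ) (hm : 2 ≤ m) :
    ∀ k : ℕ, k ≤ 2 * m →
      (∑ ℓ ∈ Finset.Icc (-(m : ℤ)) (m : ℤ), centralCoeff m ℓ * (ℓ : ℝ) ^ k) =
        if k = 0 ∨ k = 1 then 1 else 0 := by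
  rintro (_ | j) hk
  · simpa using sum_centralCoeff m
  · simp only [centralCoeff_mul_pow_succ]
    rw [Finset.sum_sub_distrib, sum_centralWeight_mul_pow m j (by omega)]
    simp [zero_pow_eq]
end

section
/- Let m ∈ ℕ with m ≥ 2. Then for every ℓ ∈ {−m, …, m} with ℓ ≠ 0, one has |a_ℓ^{(2m)}| < 1/|ℓ|. -/
/-- Strict log-convexity of the factorial. -/
lemma centralCoeff_factorial_aux (n j k : ℕ) (hj : 0 < j) (hk : 0 < k) :
    (n + j).factorial * (n + k).factorial < (n + j + k).factorial * n.factorial := by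
  induction k, hk using Nat.le_induction with
  | base =>
    have h1 := Nat.mul_pos (n + j).factorial_pos n.factorial_pos
    rw [Nat.factorial_succ, Nat.factorial_succ]
    nlinarith
  | succ k _ ih =>
    rw [← Nat.add_assoc, ← Nat.add_assoc, Nat.factorial_succ, Nat.factorial_succ (n + j + k)]
    calc (n + j).factorial * ((n + k + 1) * (n + k).factorial)
        = (n + k + 1) * ((n + j).factorial * (n + k).factorial) := by ring
      _ < (n + k + 1) * ((n + j + k).factorial * n.factorial) := by gcongr
      _ ≤ (n + j + k + 1) * ((n + j + k).factorial * n.factorial) := by gcongr; omega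
      _ = _ := by ring

lemma centralCoeff_factorial_lt (m : ℕ) (ℓ : ℤ) (h1 : -(m : ℤ) ≤ ℓ) (h2 : ℓ ≤ m) (h0 : ℓ ≠ 0) :
    m.factorial ^ 2 < ((m : ℤ) + ℓ).toNat.factorial * ((m : ℤ) - ℓ).toNat.factorial := by
  have key := centralCoeff_factorial_aux (m - ℓ.natAbs) ℓ.natAbs ℓ.natAbs (by omega) (by omega)
  rw [show m - ℓ.natAbs + ℓ.natAbs = m by omega, ← sq] at key
  rcases le_total 0 ℓ with h | h
  · rwa [show ((m : ℤ) + ℓ).toNat = m + ℓ.natAbs by omega,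
      show ((m : ℤ) - ℓ).toNat = m - ℓ.natAbs by omega]
  · rwa [show ((m : ℤ) + ℓ).toNat = m - ℓ.natAbs by omega,
      show ((m : ℤ) - ℓ).toNat = m + ℓ.natAbs by omega, mul_comm]

theorem centralCoeff_abs_lt (m : ℕ) (hm : 2 ≤ m) :
    ∀ ℓ ∈ Finset.Icc (-(m : ℤ)) (m : ℤ), ℓ ≠ 0 →
      |centralCoeff m ℓ| < 1 / |(ℓ : ℝ)| := by
  intro ℓ hℓ h0
  obtain ⟨h1, h2⟩ := Finset.mem_Icc.mp hℓ
  have key : (m.factorial : ℝ) ^ 2 <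
      (((m : ℤ) + ℓ).toNat.factorial : ℝ) * (((m : ℤ) - ℓ).toNat.factorial : ℝ) := by
    exact_mod_cast centralCoeff_factorial_lt m ℓ h1 h2 h0
  have hpos : 0 < |(ℓ : ℝ)| := abs_pos.mpr (by exact_mod_cast h0)
  rw [centralCoeff, if_neg h0, mul_assoc (ℓ : ℝ), abs_div, abs_mul, abs_mul, abs_zpow, abs_neg,
    abs_one, one_zpow, one_mul, abs_of_nonneg (by positivity : (0 : ℝ) ≤ (m.factorial : ℝ) ^ 2),
    abs_of_nonneg (lt_of_le_of_lt (sq_nonneg _) key).le,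
    div_lt_div_iff₀ (mul_pos hpos (lt_of_le_of_lt (sq_nonneg _) key)) hpos, one_mul, mul_comm]
  exact mul_lt_mul_of_pos_left key hpos
end

section
/- Let m ∈ ℕ with m ≥ 2. Then for every integer k ≥ 2m+1, one has |Σ_{ℓ=−m}^{m} a_ℓ^{(2m)} ℓ^k| ≤ 2 m^k. -/
theorem factorial_sq_le_of_add_eq {m p q : ℕ} (h : p + q = 2 * m) :
    m.factorial ^ 2 ≤ p.factorial * q.factorial := by
  have h1 := Nat.choose_mul_factorial_mul_factorial (show p ≤ 2 * m by omega)
  have h2 := Nat.choose_mul_factorial_mul_factorial (show m ≤ 2 * m by omega)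
  rw [show 2 * m - p = q by omega] at h1
  rw [show 2 * m - m = m by omega] at h2
  have h3 : (2 * m).choose p ≤ (2 * m).choose m := Nat.choose_le_centralBinom p m
  have h4 : 0 < (2 * m).choose m := Nat.choose_pos (by omega)
  refine Nat.le_of_mul_le_mul_left ?_ h4
  calc (2 * m).choose m * m.factorial ^ 2
      = (2 * m).choose p * (p.factorial * q.factorial) := by
        rw [pow_two, ← mul_assoc, ← mul_assoc, h2, h1]
    _ ≤ (2 * m).choose m * (p.factorial * q.factorial) := Nat.mul_le_mul_right _ h3

theorem abs_centralCoeff_mul_abs_le_one {m : ℕ} {l : ℤ} (hl : l ≠ 0) (h1 : -(m : ℤ) ≤ l)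
    (h2 : l ≤ m) : |centralCoeff m l| * |(l : ℝ)| ≤ 1 := by
  have hl' : (l : ℝ) ≠ 0 := Int.cast_ne_zero.mpr hl
  have h : ((m.factorial : ℝ)) ^ 2 ≤
      ((m + l).toNat.factorial : ℝ) * ((m - l).toNat.factorial : ℝ) := by
    exact_mod_cast factorial_sq_le_of_add_eq (by omega)
  have hp : (0 : ℝ) < (m + l).toNat.factorial := by exact_mod_cast Nat.factorial_pos _
  have hq : (0 : ℝ) < (m - l).toNat.factorial := by exact_mod_cast Nat.factorial_pos _
  rw [centralCoeff, if_neg hl, abs_div, abs_mul, abs_mul, abs_mul, abs_zpow, abs_neg, abs_one,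
    one_zpow, one_mul, abs_of_pos hp, abs_of_pos hq, abs_of_nonneg (sq_nonneg _),
    div_mul_eq_mul_div, div_le_one (by positivity)]
  nlinarith [mul_le_mul_of_nonneg_left h (abs_nonneg (l : ℝ))]

theorem centralCoeff_sum_pow_tail_bound (m : ℕ) (hm : 2 ≤ m) :
    ∀ k : ℕ, 2 * m + 1 ≤ k →
      |∑ ℓ ∈ Finset.Icc (-(m : ℤ)) (m : ℤ), centralCoeff m ℓ * (ℓ : ℝ) ^ k| ≤
        2 * (m : ℝ) ^ k := by
  intro k hk
  obtain ⟨n, rfl⟩ : ∃ n, k = n + 1 := ⟨k - 1, by omega⟩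
  rw [← Finset.sum_erase (a := (0 : ℤ)) _ (by simp)]
  have hcard : ((Finset.Icc (-(m : ℤ)) m).erase 0).card = 2 * m := by
    rw [Finset.card_erase_of_mem (by simp), Int.card_Icc]
    omega
  have hterm : ∀ l ∈ (Finset.Icc (-(m : ℤ)) m).erase 0,
      |centralCoeff m l * (l : ℝ) ^ (n + 1)| ≤ (m : ℝ) ^ n := by
    intro l hl
    obtain ⟨hl0, hl⟩ := Finset.mem_erase.mp hl
    obtain ⟨h1, h2⟩ := Finset.mem_Icc.mp hl
    have hlm : |(l : ℝ)| ≤ m := by exact_mod_cast abs_le.mpr ⟨h1, h2⟩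
    calc |centralCoeff m l * (l : ℝ) ^ (n + 1)|
        = |centralCoeff m l| * |(l : ℝ)| * |(l : ℝ)| ^ n := by
          rw [abs_mul, abs_pow, pow_succ]; ring
      _ ≤ 1 * (m : ℝ) ^ n := by
          gcongr
          exact abs_centralCoeff_mul_abs_le_one hl0 h1 h2
      _ = (m : ℝ) ^ n := one_mul _
  calc _ ≤ _ := Finset.abs_sum_le_sum_abs _ _
    _ ≤ _ := Finset.sum_le_card_nsmul _ _ _ hterm
    _ = 2 * (m : ℝ) ^ (n + 1) := by
      rw [hcard, nsmul_eq_mul]; push_cast; ring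
end

section
/- Let d ∈ ℕ, c > 0, ε ∈ (0, c/146), and b ∈ {−1,1}^d. Then the test function f_{d,c,ε,b} is a Gevrey function on ℝ^d with parameters c and σ = 0; that is, for all x ∈ ℝ^d, all k ∈ ℕ₀ and all α ∈ [d]^k, |∂_α f_{d,c,ε,b}(x)| ≤ (1/2) c^k. -/
/-!
Since `cos t = sin (t + π / 2)`, the test function is a linear combination of phase-shifted
products `∏ k, sin (c * x k + φ k)`. Differentiating such a product in direction `j` multiplies it
by `c` and shifts the phase `φ j` by `π / 2` (`pderiv'_sinProd`), so every iterated partial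
derivative is `c ^ α.length` times a linear combination of such products with the *same*
coefficients (`pderivMulti_sum_sinProd`). Each product is bounded by `1`, and the coefficients have
absolute sum `73 * ε / c < 1 / 2`.
-/

/-- Partial derivative of `f : ℝ^d → ℝ` in the `j`-th coordinate direction. -/
noncomputable def pderiv' {d : ℕ} (j : Fin d) (f : (Fin d → ℝ) → ℝ) :
    (Fin d → ℝ) → ℝ :=
  fun x => fderiv ℝ f x (Pi.single j 1)

/-- Consecutive partial differentiation `∂_α = ∂_{α₁}∂_{α₂}⋯∂_{α_k}` along a
multi-index `α ∈ [d]^k`, encoded as a list of coordinates. -/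
noncomputable def pderivMulti {d : ℕ} : List (Fin d) → ((Fin d → ℝ) → ℝ) → ((Fin d → ℝ) → ℝ)
  | [], f => f
  | j :: α, f => pderiv' j (pderivMulti α f)

/-- The test function
`f_{d,c,ε,b}(x) = Σ_{j=1}^d (73 ε b_j / (c d)) sin(c x_j) Π_{k ≠ j} cos(c x_k)`. -/
noncomputable def testFun (d : ℕ) (c ε : ℝ) (b : Fin d → ℝ) (x : Fin d → ℝ) : ℝ :=
  ∑ j, 73 * ε * b j / (c * d) * Real.sin (c * x j) *
    ∏ k ∈ Finset.univ.erase j, Real.cos (c * x k)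

/-- The product of sines `∏ k, sin (c * x k + φ k)` with frequency `c` and phases `φ`. -/
noncomputable def sinProd {d : ℕ} (c : ℝ) (φ : Fin d → ℝ) (x : Fin d → ℝ) : ℝ :=
  ∏ k, Real.sin (c * x k + φ k)

lemma contDiff_sinProd {d : ℕ} (c : ℝ) (φ : Fin d → ℝ) :
    ContDiff ℝ (⊤ : ℕ∞) (sinProd c φ) := by
  unfold sinProd
  fun_prop

lemma differentiable_sinProd {d : ℕ} (c : ℝ) (φ : Fin d → ℝ) :
    Differentiable ℝ (sinProd c φ) :=
  (contDiff_sinProd c φ).differentiable (by simp)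

lemma abs_sinProd_le_one {d : ℕ} (c : ℝ) (φ x : Fin d → ℝ) : |sinProd c φ x| ≤ 1 := by
  rw [sinProd, Finset.abs_prod]
  exact Finset.prod_le_one (fun _ _ => abs_nonneg _) (fun _ _ => Real.abs_sin_le_one _)

lemma pderiv'_sinProd {d : ℕ} (c : ℝ) (φ : Fin d → ℝ) (j : Fin d) (x : Fin d → ℝ) :
    pderiv' j (sinProd c φ) x = c * sinProd c (φ + Pi.single j (Real.pi / 2)) x := by
  have hfac : ∀ k ∈ (Finset.univ : Finset (Fin d)),
      HasFDerivAt (fun y : Fin d → ℝ => Real.sin (c * y k + φ k))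
        (Real.cos (c * x k + φ k) • c • ContinuousLinearMap.proj (R := ℝ) (φ := fun _ => ℝ) k)
        x := by
    intro k _
    exact (((hasFDerivAt_apply k x).const_mul c).add_const (φ k)).sin
  have hprod : HasFDerivAt (sinProd c φ) _ x := HasFDerivAt.finsetProd hfac
  -- Only the factor with index `j` depends on the `j`-th coordinate.
  rw [pderiv', hprod.fderiv, sum_apply, Finset.sum_eq_single j]
  · have hshift : ∏ k ∈ Finset.univ.erase j,
          Real.sin (c * x k + (φ + Pi.single j (Real.pi / 2) : Fin d → ℝ) k) =
        ∏ k ∈ Finset.univ.erase j, Real.sin (c * x k + φ k) := by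
      refine Finset.prod_congr rfl fun k hk => ?_
      simp [Finset.ne_of_mem_erase hk]
    rw [sinProd, ← Finset.mul_prod_erase _ _ (Finset.mem_univ j), hshift]
    simp [← add_assoc, Real.sin_add_pi_div_two]
    ring
  · intro k _ hk
    simp [hk]
  · simp

/-- Iterated partial derivatives act on linear combinations of sine products by a power of the
frequency and by a phase shift common to all summands. -/
lemma pderivMulti_sum_sinProd {d : ℕ} {ι : Type*} (s : Finset ι) (c : ℝ) (a : ι → ℝ)
    (φ : ι → Fin d → ℝ) (α : List (Fin d)) :
    ∃ θ : Fin d → ℝ, pderivMulti α (fun x => ∑ i ∈ s, a i * sinProd c (φ i) x) =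
      fun x => ∑ i ∈ s, c ^ α.length * a i * sinProd c (φ i + θ) x := by
  induction α with
  | nil => exact ⟨0, by simp [pderivMulti]⟩
  | cons j α ih =>
    obtain ⟨θ, hθ⟩ := ih
    refine ⟨θ + Pi.single j (Real.pi / 2), ?_⟩
    funext x
    have hd : ∀ i ∈ s, DifferentiableAt ℝ
        (fun y => c ^ α.length * a i * sinProd c (φ i + θ) y) x :=
      fun i _ => (differentiable_sinProd c _ x).const_mul _
    rw [pderivMulti, hθ, pderiv', fderiv_fun_sum hd, sum_apply]
    refine Finset.sum_congr rfl fun i _ => ?_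
    have h := pderiv'_sinProd c (φ i + θ) j x
    rw [pderiv'] at h
    rw [fderiv_const_mul (differentiable_sinProd c _ x), smul_apply, h,
      smul_eq_mul, List.length_cons, add_assoc]
    ring

lemma testFun_eq_sum_sinProd (d : ℕ) (c ε : ℝ) (b : Fin d → ℝ) :
    testFun d c ε b = fun x => ∑ j, 73 * ε * b j / (c * d) *
      sinProd c (fun k => if k = j then 0 else Real.pi / 2) x := by
  funext x
  refine Finset.sum_congr rfl fun j _ => ?_
  rw [sinProd, ← Finset.mul_prod_erase _ _ (Finset.mem_univ j), mul_assoc]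
  congr 2
  · simp
  · refine Finset.prod_congr rfl fun k hk => ?_
    simp [Finset.ne_of_mem_erase hk, Real.sin_add_pi_div_two]

theorem testFun_is_gevrey
    (d : ℕ) (hd : 0 < d) (c ε : ℝ) (hc : 0 < c) (hε : ε ∈ Set.Ioo 0 (c / 146))
    (b : Fin d → ℝ) (hb : ∀ j, b j = 1 ∨ b j = -1) :
    ContDiff ℝ (⊤ : ℕ∞) (testFun d c ε b) ∧
      ∀ x : Fin d → ℝ, ∀ α : List (Fin d),
        |pderivMulti α (testFun d c ε b) x| ≤ 1 / 2 * c ^ α.length := by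
  rw [testFun_eq_sum_sinProd]
  refine ⟨ContDiff.sum fun j _ => contDiff_const.mul (contDiff_sinProd c _), fun x α => ?_⟩
  obtain ⟨θ, hθ⟩ := pderivMulti_sum_sinProd Finset.univ c
    (fun j => 73 * ε * b j / (c * d)) (fun j k => if k = j then 0 else Real.pi / 2) α
  rw [hθ]
  obtain ⟨hε0, hε1⟩ := hε
  have hd' : (0 : ℝ) < d := by exact_mod_cast hd
  have hterm : ∀ j : Fin d, |c ^ α.length * (73 * ε * b j / (c * d)) *
      sinProd c ((fun k => if k = j then 0 else Real.pi / 2) + θ) x| ≤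
      c ^ α.length * (73 * ε / (c * d)) := by
    intro j
    have hbj : |b j| = 1 := by rcases hb j with h | h <;> simp [h]
    have hcoef : |c ^ α.length * (73 * ε * b j / (c * d))| =
        c ^ α.length * (73 * ε / (c * d)) := by
      rw [abs_mul, abs_div, abs_mul (73 * ε), hbj, mul_one, abs_of_pos (by positivity),
        abs_of_pos (by positivity), abs_of_pos (by positivity)]
    rw [abs_mul, hcoef]
    exact mul_le_of_le_one_right (by positivity) (abs_sinProd_le_one _ _ _)
  calc _ ≤ ∑ _j : Fin d, c ^ α.length * (73 * ε / (c * d)) :=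
        (Finset.abs_sum_le_sum_abs _ _).trans (Finset.sum_le_sum fun j _ => hterm j)
    _ = 73 * ε / c * c ^ α.length := by
        rw [Finset.sum_const, Finset.card_univ, Fintype.card_fin, nsmul_eq_mul]
        field_simp
    _ ≤ 1 / 2 * c ^ α.length := by
        refine mul_le_mul_of_nonneg_right ?_ (by positivity)
        rw [div_le_iff₀ hc]
        linarith
end

section
/- Let d ∈ ℕ, c > 0, ε > 0, b* ∈ {−1,1}^d and U ⊆ [d]. For j ∈ U, let b^{(j)} ∈ {−1,1}^d be the vector obtained from b* by flipping the sign of the j-th entry. Then for every x ∈ ℝ^d, Σ_{j ∈ U} |f_{d,c,ε,b*}(x) − f_{d,c,ε,b^{(j)}}(x)|² ≤ (146 ε / (c d))². -/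
/-- If `p i + q i = 1` with `p, q ≥ 0`, the terms of degree at most one in `p` in the expansion of
`∏ i ∈ s, (p i + q i)` sum to at most `1`: for independent events of probabilities `p i`, this is
the probability that at most one of them occurs. The degree-zero term makes the induction close. -/
theorem sum_mul_prod_erase_add_prod_le_one {ι : Type*} [DecidableEq ι] (p q : ι → ℝ)
    (hp : ∀ i, 0 ≤ p i) (hq : ∀ i, 0 ≤ q i) (hpq : ∀ i, p i + q i = 1) (s : Finset ι) :
    ∑ j ∈ s, p j * ∏ k ∈ s.erase j, q k + ∏ k ∈ s, q k ≤ 1 := by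
  induction s using Finset.induction_on with
  | empty => simp
  | insert a s ha ih =>
    have h : ∑ j ∈ s, p j * ∏ k ∈ (insert a s).erase j, q k
        = q a * ∑ j ∈ s, p j * ∏ k ∈ s.erase j, q k := by
      rw [Finset.mul_sum]
      refine Finset.sum_congr rfl fun j hj => ?_
      have hja : a ≠ j := fun e => ha (e ▸ hj)
      rw [Finset.erase_insert_of_ne hja, Finset.prod_insert (by simp [ha])]
      ring
    rw [Finset.sum_insert ha, Finset.erase_insert ha, h, Finset.prod_insert ha]
    have hS : 0 ≤ ∑ j ∈ s, p j * ∏ k ∈ s.erase j, q k :=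
      Finset.sum_nonneg fun j _ => mul_nonneg (hp j) (Finset.prod_nonneg fun k _ => hq k)
    nlinarith [hp a, hq a, hpq a, mul_le_mul_of_nonneg_left ih (hq a), mul_nonneg (hp a) hS,
      mul_le_mul_of_nonneg_left ih (hp a)]

theorem testFun_sub_update (d : ℕ) (c ε : ℝ) (b x : Fin d → ℝ) (j : Fin d) :
    testFun d c ε b x - testFun d c ε (Function.update b j (-b j)) x =
      146 * ε / (c * d) * b j *
        (Real.sin (c * x j) * ∏ k ∈ Finset.univ.erase j, Real.cos (c * x k)) := by
  unfold testFun
  rw [← Finset.sum_sub_distrib, Finset.sum_eq_single j]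
  · rw [Function.update_self]
    ring
  · intro i _ hij
    rw [Function.update_of_ne hij, sub_self]
  · simp

theorem testFun_flip_sum_sq_bound
    (d : ℕ) (hd : 0 < d) (c ε : ℝ) (hc : 0 < c) (hε : 0 < ε)
    (bstar : Fin d → ℝ) (hb : ∀ j, bstar j = 1 ∨ bstar j = -1)
    (U : Finset (Fin d)) :
    ∀ x : Fin d → ℝ,
      (∑ j ∈ U,
        |testFun d c ε bstar x -
          testFun d c ε (Function.update bstar j (-bstar j)) x| ^ 2) ≤
      (146 * ε / (c * d)) ^ 2 := by
  intro x
  have hterm : ∀ j, |testFun d c ε bstar x -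
      testFun d c ε (Function.update bstar j (-bstar j)) x| ^ 2 = (146 * ε / (c * d)) ^ 2 *
        (Real.sin (c * x j) ^ 2 * ∏ k ∈ Finset.univ.erase j, Real.cos (c * x k) ^ 2) := by
    intro j
    have hbj : bstar j ^ 2 = 1 := by rcases hb j with h | h <;> simp [h]
    rw [sq_abs, testFun_sub_update, mul_pow, mul_pow, mul_pow, hbj, mul_one, Finset.prod_pow]
  simp_rw [hterm]
  rw [← Finset.mul_sum]
  refine mul_le_of_le_one_right (sq_nonneg _) ?_
  have hexp := sum_mul_prod_erase_add_prod_le_one (fun k => Real.sin (c * x k) ^ 2)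
    (fun k => Real.cos (c * x k) ^ 2) (fun _ => sq_nonneg _) (fun _ => sq_nonneg _)
    (fun k => Real.sin_sq_add_cos_sq (c * x k)) Finset.univ
  have hP : 0 ≤ ∏ k, Real.cos (c * x k) ^ 2 := Finset.prod_nonneg fun _ _ => sq_nonneg _
  have hU := Finset.sum_le_sum_of_subset_of_nonneg (Finset.subset_univ U)
    (f := fun j => Real.sin (c * x j) ^ 2 *
      ∏ k ∈ Finset.univ.erase j, Real.cos (c * x k) ^ 2)
    fun j _ _ => mul_nonneg (sq_nonneg _) (Finset.prod_nonneg fun _ _ => sq_nonneg _)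
  linarith
end

section
/- Let d ∈ ℕ and let M ⊆ [d] × {−1,1}^d (say that vertex b ∈ {−1,1}^d is 'marked by coordinate j' if (j,b) ∈ M). Suppose there exists J ⊆ [d] with |J| ≥ (3/4)d such that for every j ∈ J, the number of vertices marked by coordinate j is at least (2/3)·2^d. Then there exist b* ∈ {−1,1}^d and U ⊆ [d] with |U| ≥ d/4 such that for every j ∈ U, both b* and the vector obtained from b* by flipping its j-th entry are marked by coordinate j. -/
/-! For each `j ∈ J`, flipping the `j`-th entry is an involution of the cube, so the set of vertices
whose flip is marked by `j` is as large as the set of vertices marked by `j`, namely at least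
`(2/3) * 2 ^ d`. By inclusion–exclusion at least `(1/3) * 2 ^ d` vertices `b` are such that both `b`
and its flip are marked by `j`. Summing over `j ∈ J` gives at least `(d / 4) * 2 ^ d` such pairs
`(j, b)`, so some vertex `b` belongs to at least `d / 4` of them. -/

/-- If `A` has density at least `2/3` in the cube, then at least a third of the vertices `b` lie in
`A` together with their neighbour in direction `j`. -/
lemma third_le_card_both_mem {d : ℕ} (j : Fin d) (A : Finset (Fin d → Bool))
    (hA : (2 / 3 : ℝ) * 2 ^ d ≤ A.card) :
    (1 / 3 : ℝ) * 2 ^ d ≤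
      ((Finset.univ.filter fun b : Fin d → Bool =>
        b ∈ A ∧ Function.update b j (!b j) ∈ A).card : ℝ) := by
  classical
  let f : (Fin d → Bool) → (Fin d → Bool) := fun b => Function.update b j (!b j)
  have hf : Function.Involutive f := fun b => by simp [f]
  have hcard : (A.image f).card = A.card := Finset.card_image_of_injective A hf.injective
  have hset : (Finset.univ.filter fun b : Fin d → Bool =>
      b ∈ A ∧ Function.update b j (!b j) ∈ A) = A ∩ A.image f := by
    ext b
    simp only [Finset.mem_filter, Finset.mem_univ, true_and, Finset.mem_inter, Finset.mem_image]
    refine and_congr_right fun _ => ⟨fun h => ⟨f b, h, hf b⟩, ?_⟩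
    rintro ⟨a, ha, rfl⟩
    change f (f a) ∈ A
    rwa [hf a]
  have hie := Finset.card_union_add_card_inter A (A.image f)
  have huniv : (A ∪ A.image f).card ≤ 2 ^ d := by
    simpa using Finset.card_le_univ (A ∪ A.image f)
  rw [hcard] at hie
  rw [hset]
  have hie' : ((A ∪ A.image f).card : ℝ) + (A ∩ A.image f).card = A.card + A.card := by
    exact_mod_cast hie
  have huniv' : ((A ∪ A.image f).card : ℝ) ≤ 2 ^ d := by exact_mod_cast huniv
  linarith

theorem marked_vertex_with_many_marked_edges
    (d : ℕ) (hd : 0 < d) (M : Finset (Fin d × (Fin d → Bool)))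
    (J : Finset (Fin d)) (hJcard : (3 / 4 : ℝ) * d ≤ J.card)
    (hmarked : ∀ j ∈ J,
      (2 / 3 : ℝ) * 2 ^ d ≤
        ((Finset.univ.filter fun b : Fin d → Bool => (j, b) ∈ M).card : ℝ)) :
    ∃ bstar : Fin d → Bool, ∃ U : Finset (Fin d),
      (d : ℝ) / 4 ≤ U.card ∧
      ∀ j ∈ U, (j, bstar) ∈ M ∧ (j, Function.update bstar j (!bstar j)) ∈ M := by
  classical
  let r : Fin d → (Fin d → Bool) → Prop := fun j b =>
    (j, b) ∈ M ∧ (j, Function.update b j (!b j)) ∈ M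
  have hdirection : ∀ j ∈ J, (1 / 3 : ℝ) * 2 ^ d ≤ ((Finset.univ.filter (r j)).card : ℝ) := by
    intro j hj
    simpa [r] using third_le_card_both_mem j _ (hmarked j hj)
  have hdouble : ∑ j ∈ J, ((Finset.univ.filter (r j)).card : ℝ) =
      ∑ b : Fin d → Bool, ((J.filter fun j => r j b).card : ℝ) := by
    exact_mod_cast Finset.sum_card_bipartiteAbove_eq_sum_card_bipartiteBelow r
  have hlower : (J.card : ℝ) * ((1 / 3 : ℝ) * 2 ^ d) ≤
      ∑ j ∈ J, ((Finset.univ.filter (r j)).card : ℝ) := by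
    simpa using Finset.card_nsmul_le_sum J _ _ hdirection
  have hpow : (0 : ℝ) < 2 ^ d := by positivity
  have havg : ∑ _b : Fin d → Bool, (d : ℝ) / 4 ≤
      ∑ b : Fin d → Bool, ((J.filter fun j => r j b).card : ℝ) := by
    rw [← hdouble]
    refine le_trans ?_ hlower
    simp only [Finset.sum_const, Finset.card_univ, Fintype.card_fun, Fintype.card_bool,
      Fintype.card_fin, nsmul_eq_mul]
    push_cast
    nlinarith
  obtain ⟨b, -, hb⟩ := Finset.exists_le_of_sum_le Finset.univ_nonempty havg
  exact ⟨b, J.filter fun j => r j b, hb, fun j hj => (Finset.mem_filter.mp hj).2⟩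
end
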